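/- arXiv:1910.03857 — 2 statements merged into one kernel-verified Lean document; each statement's English description precedes it below -/
import Mathlib

section
/- Assume π(a|s) > 0 and π̃(a|s) > 0 for all (s,a), and let ε = max_{s∈S, a∈A} |A^π(s,a)|. Then for every horizon T ∈ ℕ and every choice of vectors α_t ∈ [0,1]^{t+1} (t = 0,…,T), | E_{τ∼π} ∑_{t=0}^{T} γ^t ρ^{α_t}_{0:t}(τ) A^π(s_t,a_t) − E_{τ∼π} ∑_{t=0}^{T} γ^t ρ_{0:t}(τ) A^π(s_t,a_t) | ≤ ε · E_{τ∼π̃} ∑_{t=0}^{T} γ^t | ∏_{i=0}^{t} (π(a_i|s_i)/π̃(a_i|s_i))^{1−α_t^i} − 1 |. -/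
/-!
Reweighting by `ρ_{0:t}` turns expectations under `π` into expectations under `π'`. Since
`x ^ a = x * x⁻¹ ^ (1 - a)`, the smoothed weight `ρ^{α}_{0:t}` is `ρ_{0:t}` times the residual
weight `ρpow π' π (1 - α) = ∏ (π / π') ^ (1 - α)`, so both estimators are expectations under `π'`
of the same payoff, with and without the residual weight. They differ by at most the payoff's bound
times the mean distance of that weight from `1`.
-/

open scoped BigOperators

namespace PolicyOpt

/-- A finite Markov decision process. -/
structure MDP (S A : Type*) [Fintype S] [Fintype A] where
  p : S → A → S → ℝ
  r : S → A → ℝ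
  γ : ℝ
  μ0 : S → ℝ
  p_nonneg : ∀ s a s', 0 ≤ p s a s'
  p_sum_one : ∀ s a, ∑ s', p s a s' = 1
  μ0_nonneg : ∀ s, 0 ≤ μ0 s
  μ0_sum_one : ∑ s, μ0 s = 1
  γ_pos : 0 < γ
  γ_lt_one : γ < 1

variable {S A : Type*} [Fintype S] [Fintype A] [DecidableEq S] [DecidableEq A]

/-- A policy assigns to every state a probability distribution over actions. -/
def IsPolicy (π : S → A → ℝ) : Prop :=
  (∀ s a, 0 ≤ π s a) ∧ ∀ s, ∑ a, π s a = 1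

/-- Trajectory prefixes (histories) consisting of `t+1` state-action pairs. -/
abbrev Hist (S A : Type*) (t : ℕ) := Fin (t + 1) → S × A

/-- Probability of a history of length `t+1` when following policy `π`
starting from the initial distribution `μ0`. -/
noncomputable def prob (M : MDP S A) (π : S → A → ℝ) (t : ℕ) (h : Hist S A t) : ℝ :=
  (M.μ0 (h 0).1 * π (h 0).1 (h 0).2) *
    ∏ i : Fin t,
      (M.p (h i.castSucc).1 (h i.castSucc).2 (h i.succ).1 * π (h i.succ).1 (h i.succ).2)

/-- Probability of a history of length `t+1` when following policy `π`,
conditioned on starting in state `s` with first action `a`. -/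
noncomputable def probFrom (M : MDP S A) (π : S → A → ℝ) (s : S) (a : A) (t : ℕ) (h : Hist S A t) : ℝ :=
  (if h 0 = (s, a) then (1 : ℝ) else 0) *
    ∏ i : Fin t,
      (M.p (h i.castSucc).1 (h i.castSucc).2 (h i.succ).1 * π (h i.succ).1 (h i.succ).2)

/-- The last state-action pair of a history. -/
def lastSA {t : ℕ} (h : Hist S A t) : S × A := h (Fin.last t)

/-- State-action value `Q^π(s,a) = E_{τ∼π}[∑_{t≥0} γ^t r(s_t,a_t) | s₀=s, a₀=a]`. -/
noncomputable def Qval (M : MDP S A) (π : S → A → ℝ) (s : S) (a : A) : ℝ :=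
  ∑' t : ℕ, M.γ ^ t * ∑ h : Hist S A t, probFrom M π s a t h * M.r (lastSA h).1 (lastSA h).2

/-- State value `V^π(s)`. -/
noncomputable def Vval (M : MDP S A) (π : S → A → ℝ) (s : S) : ℝ :=
  ∑ a, π s a * Qval M π s a

/-- Advantage `A^π(s,a) = Q^π(s,a) - V^π(s)`. -/
noncomputable def Adv (M : MDP S A) (π : S → A → ℝ) (s : S) (a : A) : ℝ :=
  Qval M π s a - Vval M π s

/-- The value `η(π) = E_{τ∼π} ∑_{t≥0} γ^t r(s_t,a_t)`. -/
noncomputable def ηval (M : MDP S A) (π : S → A → ℝ) : ℝ :=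
  ∑' t : ℕ, M.γ ^ t * ∑ h : Hist S A t, prob M π t h * M.r (lastSA h).1 (lastSA h).2

/-- Normalised discounted state occupancy measure
`d^π(s) = (1-γ) ∑_{t≥0} γ^t Pr_{τ∼π}(s_t = s)`. -/
noncomputable def dOcc (M : MDP S A) (π : S → A → ℝ) (s : S) : ℝ :=
  (1 - M.γ) * ∑' t : ℕ, M.γ ^ t *
    ∑ h : Hist S A t, prob M π t h * (if (lastSA h).1 = s then (1 : ℝ) else 0)

/-- The surrogate objective `L_π(π') = (1/(1-γ)) ∑_s d^π(s) ∑_a π'(a|s) A^π(s,a)`. -/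
noncomputable def Lsur (M : MDP S A) (π π' : S → A → ℝ) : ℝ :=
  (1 - M.γ)⁻¹ * ∑ s, dOcc M π s * ∑ a, π' s a * Adv M π s a

/-- Product of importance sampling ratios `ρ_{0:t}` along a history. -/
noncomputable def ρprod (π π' : S → A → ℝ) {t : ℕ} (h : Hist S A t) : ℝ :=
  ∏ i, π' (h i).1 (h i).2 / π (h i).1 (h i).2

/-- Smoothed product of importance sampling ratios `ρ^{α}_{0:t}`. -/
noncomputable def ρpow (π π' : S → A → ℝ) {t : ℕ} (α : Fin (t + 1) → ℝ) (h : Hist S A t) : ℝ :=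
  ∏ i, (π' (h i).1 (h i).2 / π (h i).1 (h i).2) ^ (α i)

/-- The prefix of length `t+1` of a history of length `T+1` (for `t ≤ T`). -/
def pref {T : ℕ} (h : Hist S A T) (t : Fin (T + 1)) : Hist S A (t : ℕ) :=
  fun i => h (Fin.castLE t.isLt i)

theorem abs_sum_mul_sub_sum_mul_le {ι R : Type*} [CommRing R] [LinearOrder R]
    [IsStrictOrderedRing R] {s : Finset ι} {w x y e : ι → R} {c : R} (hw : ∀ i ∈ s, 0 ≤ w i)
    (hxy : ∀ i ∈ s, |x i - y i| ≤ c * e i) :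
    |∑ i ∈ s, w i * x i - ∑ i ∈ s, w i * y i| ≤ c * ∑ i ∈ s, w i * e i :=
  calc |∑ i ∈ s, w i * x i - ∑ i ∈ s, w i * y i|
      = |∑ i ∈ s, w i * (x i - y i)| := by simp only [mul_sub, Finset.sum_sub_distrib]
    _ ≤ ∑ i ∈ s, |w i * (x i - y i)| := Finset.abs_sum_le_sum_abs _ _
    _ ≤ ∑ i ∈ s, w i * (c * e i) := Finset.sum_le_sum fun i hi => by
        rw [abs_mul, abs_of_nonneg (hw i hi)]
        exact mul_le_mul_of_nonneg_left (hxy i hi) (hw i hi)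
    _ = c * ∑ i ∈ s, w i * e i := by simp only [Finset.mul_sum, mul_left_comm]

theorem rpow_eq_mul_inv_rpow_one_sub {x : ℝ} (hx : 0 < x) (a : ℝ) :
    x ^ a = x * x⁻¹ ^ (1 - a) :=
  calc x ^ a = x ^ (1 - (1 - a)) := by rw [sub_sub_cancel]
    _ = x * x⁻¹ ^ (1 - a) := by
        rw [Real.rpow_sub hx, Real.rpow_one, Real.inv_rpow hx.le, div_eq_mul_inv]

section ImportanceSampling

omit [DecidableEq S] [DecidableEq A]

variable {π π' : S → A → ℝ} {t : ℕ}

omit [Fintype S] [Fintype A] in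
theorem ρpow_eq_ρprod_mul_ρpow_one_sub (hπ : ∀ s a, 0 < π s a) (hπ' : ∀ s a, 0 < π' s a)
    (α : Fin (t + 1) → ℝ) (h : Hist S A t) :
    ρpow π π' α h = ρprod π π' h * ρpow π' π (1 - α) h := by
  unfold ρpow ρprod
  rw [← Finset.prod_mul_distrib]
  refine Finset.prod_congr rfl fun i _ => ?_
  rw [rpow_eq_mul_inv_rpow_one_sub (div_pos (hπ' _ _) (hπ _ _)), inv_div, Pi.sub_apply,
    Pi.one_apply]

theorem prob_nonneg (M : MDP S A) (hπ : ∀ s a, 0 ≤ π s a) (h : Hist S A t) : 0 ≤ prob M π t h :=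
  mul_nonneg (mul_nonneg (M.μ0_nonneg _) (hπ _ _))
    (Finset.prod_nonneg fun _ _ => mul_nonneg (M.p_nonneg _ _ _) (hπ _ _))

theorem prob_mul_ρprod (M : MDP S A) (hπ : ∀ s a, π s a ≠ 0) (π' : S → A → ℝ) (h : Hist S A t) :
    prob M π t h * ρprod π π' h = prob M π' t h := by
  have mul_ratio (c : ℝ) (q : S × A) :
      c * π q.1 q.2 * (π' q.1 q.2 / π q.1 q.2) = c * π' q.1 q.2 := by
    rw [mul_assoc, mul_div_cancel₀ _ (hπ _ _)]
  unfold prob ρprod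
  rw [Fin.prod_univ_succ, mul_mul_mul_comm, ← Finset.prod_mul_distrib]
  simp only [mul_ratio]

theorem sum_prob_mul_ρprod_mul (M : MDP S A) (hπ : ∀ s a, π s a ≠ 0) (π' : S → A → ℝ)
    (f : Hist S A t → ℝ) :
    ∑ h, prob M π t h * (ρprod π π' h * f h) = ∑ h, prob M π' t h * f h := by
  simp only [← mul_assoc, prob_mul_ρprod M hπ]

theorem sum_prob_mul_ρpow_mul (M : MDP S A) (hπ : ∀ s a, 0 < π s a) (hπ' : ∀ s a, 0 < π' s a)
    (α : Fin (t + 1) → ℝ) (f : Hist S A t → ℝ) :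
    ∑ h, prob M π t h * (ρpow π π' α h * f h) =
      ∑ h, prob M π' t h * (ρpow π' π (1 - α) h * f h) := by
  simp only [ρpow_eq_ρprod_mul_ρpow_one_sub hπ hπ', mul_assoc]
  exact sum_prob_mul_ρprod_mul M (fun s a => (hπ s a).ne') π' _

theorem abs_sum_prob_mul_ρpow_mul_sub_le (M : MDP S A)
    (hπ : ∀ s a, 0 < π s a) (hπ' : ∀ s a, 0 < π' s a) (α : Fin (t + 1) → ℝ)
    {f : Hist S A t → ℝ} {ε : ℝ} (hf : ∀ h, |f h| ≤ ε) :
    |∑ h, prob M π t h * (ρpow π π' α h * f h) - ∑ h, prob M π t h * (ρprod π π' h * f h)| ≤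
      ε * ∑ h, prob M π' t h * |ρpow π' π (1 - α) h - 1| := by
  rw [sum_prob_mul_ρpow_mul M hπ hπ', sum_prob_mul_ρprod_mul M fun s a => (hπ s a).ne']
  refine abs_sum_mul_sub_sum_mul_le (fun h _ => prob_nonneg M (fun s a => (hπ' s a).le) h)
    fun h _ => ?_
  rw [← sub_one_mul, abs_mul, mul_comm]
  exact mul_le_mul_of_nonneg_right (hf h) (abs_nonneg _)

theorem bias_bound_smoothed_IS_general (M : MDP S A) (hπ : IsPolicy π) (hπ' : IsPolicy π')
    (hπ_ne : ∀ s a, π s a ≠ 0) (hπ'_ne : ∀ s a, π' s a ≠ 0)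
    {f : (t : ℕ) → Hist S A t → ℝ} {ε : ℝ} (hf : ∀ t h, |f t h| ≤ ε)
    (α : (t : ℕ) → Fin (t + 1) → ℝ) (T : ℕ) :
    |(∑ t ∈ Finset.range (T + 1), M.γ ^ t * ∑ h, prob M π t h * (ρpow π π' (α t) h * f t h)) -
      ∑ t ∈ Finset.range (T + 1), M.γ ^ t * ∑ h, prob M π t h * (ρprod π π' h * f t h)| ≤
      ε * ∑ t ∈ Finset.range (T + 1), M.γ ^ t *
        ∑ h, prob M π' t h * |ρpow π' π (1 - α t) h - 1| :=
  abs_sum_mul_sub_sum_mul_le (fun t _ => pow_nonneg M.γ_pos.le t) fun t _ =>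
    abs_sum_prob_mul_ρpow_mul_sub_le M (fun s a => (hπ.1 s a).lt_of_ne' (hπ_ne s a))
      (fun s a => (hπ'.1 s a).lt_of_ne' (hπ'_ne s a)) (α t) (hf t)

end ImportanceSampling

/-- Bias bound for the truncated smoothed importance-sampling estimator. -/
theorem bias_bound_smoothed_IS
    [Nonempty S] [Nonempty A]
    (M : MDP S A) (π π' : S → A → ℝ)
    (hπ : IsPolicy π) (hπ' : IsPolicy π')
    (hπpos : ∀ s a, 0 < π s a) (hπ'pos : ∀ s a, 0 < π' s a)
    (ε : ℝ)
    (hε : ε = Finset.univ.sup' Finset.univ_nonempty fun q : S × A => |Adv M π q.1 q.2|)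
    (α : (t : ℕ) → Fin (t + 1) → ℝ) (hα : ∀ t i, α t i ∈ Set.Icc (0 : ℝ) 1)
    (T : ℕ) :
    |(∑ t ∈ Finset.range (T + 1), M.γ ^ t *
        ∑ h : Hist S A t, prob M π t h *
          (ρpow π π' (α t) h * Adv M π (lastSA h).1 (lastSA h).2)) -
      ∑ t ∈ Finset.range (T + 1), M.γ ^ t *
        ∑ h : Hist S A t, prob M π t h *
          (ρprod π π' h * Adv M π (lastSA h).1 (lastSA h).2)| ≤
      ε * ∑ t ∈ Finset.range (T + 1), M.γ ^ t *
        ∑ h : Hist S A t, prob M π' t h *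
          |(∏ i, (π (h i).1 (h i).2 / π' (h i).1 (h i).2) ^ ((1 : ℝ) - α t i)) - 1| :=
  bias_bound_smoothed_IS_general M hπ hπ' (fun s a => (hπpos s a).ne') (fun s a => (hπ'pos s a).ne')
    (fun _ h => hε ▸ Finset.le_sup' (fun q : S × A => |Adv M π q.1 q.2|)
      (Finset.mem_univ (lastSA h))) α T

end PolicyOpt
end

section
/- For any two policies π and π̃, η(π̃) − η(π) = (1/(1−γ)) · ∑_{s∈S} d^{π̃}(s) ∑_{a∈A} π̃(a|s) A^π(s,a). -/
/-!
Write `P` for the matrix of transition probabilities from state-action pairs to states and `Π`, `Π'`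
for the matrices of the policies `π`, `π'`. Summing over trajectories turns discounted expectations
into resolvents of the state-action chain `P Π`, and the push-through identity
`Π (1 - γ P Π)⁻¹ = (1 - γ Π P)⁻¹ Π` moves them to the state chain `Π P`:
`η(π) = μ₀ (1 - γ Π P)⁻¹ Π r` and `d^π = (1 - γ) μ₀ (1 - γ Π P)⁻¹`.

Since `Q^π = r + γ P V^π`, averaging the advantage of `π` over the actions of `π'` gives
`Π' A^π = Π' r - (1 - γ Π' P) V^π`. Applying `μ₀ (1 - γ Π' P)⁻¹` to both sides cancels the resolvent
in the last term and leaves `η(π') - μ₀ V^π = η(π') - η(π)`.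
-/

open scoped BigOperators

namespace PolicyOpt

variable {S A : Type*} [Fintype S] [Fintype A] [DecidableEq S] [DecidableEq A]

open Matrix

section Paths

variable {R ι : Type*} [CommSemiring R] [Fintype ι] [DecidableEq ι]

theorem sum_path_eq_dotProduct_pow_mulVec (K : Matrix ι ι R) (w f : ι → R) (t : ℕ) :
    ∑ h : Fin (t + 1) → ι,
        w (h 0) * (∏ i : Fin t, K (h i.castSucc) (h i.succ)) * f (h (Fin.last t)) =
      w ⬝ᵥ K ^ t *ᵥ f := by
  induction t generalizing f with
  | zero =>
    rw [← (Equiv.funUnique (Fin 1) ι).symm.sum_comp]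
    simp [dotProduct]
  | succ t ih =>
    -- Splitting off the endpoint of the path turns `f` into `K *ᵥ f`.
    rw [pow_succ, ← mulVec_mulVec, ← ih, ← (Fin.snocEquiv fun _ => ι).sum_comp,
      Fintype.sum_prod_type, Finset.sum_comm]
    refine Finset.sum_congr rfl fun h _ => ?_
    have snoc_zero (y : ι) : (Fin.snoc h y : Fin (t + 2) → ι) 0 = h 0 :=
      Fin.snoc_castSucc (α := fun _ => ι) y h 0
    simp only [Fin.snocEquiv_apply, Fin.prod_univ_castSucc, Fin.succ_castSucc, Fin.succ_last,
      Fin.snoc_castSucc, Fin.snoc_last, snoc_zero, mulVec, dotProduct, Finset.mul_sum, mul_assoc]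

end Paths

section PushThrough

variable {R m n : Type*} [CommRing R] [Fintype m] [DecidableEq m] [Fintype n] [DecidableEq n]

theorem inv_one_sub_mul_mul_eq (A : Matrix m n R) (B : Matrix n m R) :
    (1 - A * B)⁻¹ * A = A * (1 - B * A)⁻¹ := by
  have det_comm : (1 - A * B).det = (1 - B * A).det := det_one_sub_mul_comm A B
  by_cases hdet : IsUnit (1 - A * B).det
  · have intertwine : A * (1 - B * A) = (1 - A * B) * A := by
      simp only [Matrix.mul_sub, Matrix.sub_mul, Matrix.mul_one, Matrix.one_mul, Matrix.mul_assoc]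
    calc (1 - A * B)⁻¹ * A
        = (1 - A * B)⁻¹ * (A * (1 - B * A)) * (1 - B * A)⁻¹ := by
          rw [Matrix.mul_assoc, mul_nonsing_inv_cancel_right _ _ (det_comm ▸ hdet)]
      _ = A * (1 - B * A)⁻¹ := by
          rw [intertwine, nonsing_inv_mul_cancel_left _ _ hdet]
  · -- Otherwise both nonsingular inverses take the junk value `0`.
    rw [nonsing_inv_apply_not_isUnit _ hdet, nonsing_inv_apply_not_isUnit _ (det_comm ▸ hdet),
      Matrix.zero_mul, Matrix.mul_zero]

theorem inv_one_sub_smul_mul_mul_eq (c : R) (A : Matrix m n R) (B : Matrix n m R) :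
    (1 - c • (A * B))⁻¹ * A = A * (1 - c • (B * A))⁻¹ := by
  rw [← Matrix.mul_smul, inv_one_sub_mul_mul_eq, Matrix.smul_mul]

end PushThrough

section Resolvent

open scoped Matrix.Norms.Operator

variable {ι : Type*} [Fintype ι] [DecidableEq ι] {P : Matrix ι ι ℝ} {γ : ℝ}

theorem norm_le_one_of_mem_rowStochastic (hP : P ∈ rowStochastic ℝ ι) : ‖P‖ ≤ 1 := by
  rw [← coe_nnnorm, ← NNReal.coe_one, NNReal.coe_le_coe, linfty_opNNNorm_def]
  refine Finset.sup_le fun i _ => NNReal.coe_le_coe.mp (le_of_eq ?_)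
  push_cast
  simp only [Real.norm_of_nonneg (nonneg_of_mem_rowStochastic hP),
    sum_row_of_mem_rowStochastic hP]

theorem norm_smul_lt_one_of_mem_rowStochastic (hP : P ∈ rowStochastic ℝ ι) (hγ : |γ| < 1) :
    ‖γ • P‖ < 1 :=
  calc ‖γ • P‖ = |γ| * ‖P‖ := norm_smul γ P
    _ ≤ |γ| := mul_le_of_le_one_right (abs_nonneg γ) (norm_le_one_of_mem_rowStochastic hP)
    _ < 1 := hγ

theorem isUnit_det_one_sub_smul_of_mem_rowStochastic (hP : P ∈ rowStochastic ℝ ι) (hγ : |γ| < 1) :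
    IsUnit (1 - γ • P).det :=
  (isUnit_iff_isUnit_det _).mp
    (isUnit_one_sub_of_norm_lt_one (norm_smul_lt_one_of_mem_rowStochastic hP hγ))

theorem hasSum_smul_pow_inv_one_sub_smul (hP : P ∈ rowStochastic ℝ ι) (hγ : |γ| < 1) :
    HasSum (fun t : ℕ => (γ • P) ^ t) (1 - γ • P)⁻¹ := by
  rw [nonsing_inv_eq_ringInverse]
  exact hasSum_geom_series_inverse _ (norm_smul_lt_one_of_mem_rowStochastic hP hγ)

theorem hasSum_discounted_sum_path (hP : P ∈ rowStochastic ℝ ι) (hγ : |γ| < 1) (w f : ι → ℝ) :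
    HasSum (fun t : ℕ => γ ^ t * ∑ h : Fin (t + 1) → ι,
        w (h 0) * (∏ i : Fin t, P (h i.castSucc) (h i.succ)) * f (h (Fin.last t)))
      (w ⬝ᵥ (1 - γ • P)⁻¹ *ᵥ f) := by
  let evalForm : Matrix ι ι ℝ →+ ℝ :=
    AddMonoidHom.mk' (fun N => w ⬝ᵥ N *ᵥ f) fun N N' => by rw [add_mulVec, dotProduct_add]
  have continuous_evalForm : Continuous evalForm :=
    continuous_const.dotProduct (continuous_id.matrix_mulVec continuous_const)
  simpa only [sum_path_eq_dotProduct_pow_mulVec, evalForm, Function.comp_def,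
    AddMonoidHom.mk'_apply, smul_pow, smul_mulVec, dotProduct_smul, smul_eq_mul] using
    (hasSum_smul_pow_inv_one_sub_smul hP hγ).map evalForm continuous_evalForm

end Resolvent

section Matrices

/-- The matrix `P` of transition probabilities, from state-action pairs (rows) to states. -/
def transMatrix (M : MDP S A) : Matrix (S × A) S ℝ :=
  of fun x s => M.p x.1 x.2 s

/-- The matrix `Π` of a policy: row `s` is the law `π(·|s)`, carried by the pairs `(s, a)`. Thus
`P Π` is the transition matrix of the state-action chain and `Π P` that of the state chain. -/
def policyMatrix (π : S → A → ℝ) : Matrix S (S × A) ℝ :=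
  of fun s x => if x.1 = s then π s x.2 else 0

variable (M : MDP S A) {π : S → A → ℝ}

omit [DecidableEq A] in
theorem policyMatrix_mulVec_apply (π : S → A → ℝ) (f : S × A → ℝ) (s : S) :
    (policyMatrix π *ᵥ f) s = ∑ a, π s a * f (s, a) := by
  simp [policyMatrix, mulVec, dotProduct, Fintype.sum_prod_type_right, ite_mul]

omit [Fintype A] [DecidableEq A] in
theorem vecMul_policyMatrix_apply (π : S → A → ℝ) (w : S → ℝ) (x : S × A) :
    (w ᵥ* policyMatrix π) x = w x.1 * π x.1 x.2 := by
  simp [policyMatrix, vecMul, dotProduct]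

omit [DecidableEq A] in
theorem transMatrix_mul_policyMatrix_apply (π : S → A → ℝ) (x y : S × A) :
    (transMatrix M * policyMatrix π) x y = M.p x.1 x.2 y.1 * π y.1 y.2 := by
  rw [mul_apply_eq_vecMul, vecMul_policyMatrix_apply]
  rfl

omit [DecidableEq A] in
theorem policyMatrix_mulVec_comp_fst (hπ : IsPolicy π) (g : S → ℝ) :
    policyMatrix π *ᵥ (g ∘ Prod.fst) = g := by
  ext s
  simp only [policyMatrix_mulVec_apply, Function.comp_apply, ← Finset.sum_mul, hπ.2 s, one_mul]

theorem transMatrix_mul_policyMatrix_mem_rowStochastic (hπ : IsPolicy π) :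
    transMatrix M * policyMatrix π ∈ rowStochastic ℝ (S × A) := by
  simp only [mem_rowStochastic_iff_sum, transMatrix_mul_policyMatrix_apply]
  refine ⟨fun x y => mul_nonneg (M.p_nonneg _ _ _) (hπ.1 _ _), fun x => ?_⟩
  simp only [Fintype.sum_prod_type, ← Finset.mul_sum, hπ.2, mul_one, M.p_sum_one]

omit [DecidableEq S] [DecidableEq A] in
theorem abs_discount_lt_one : |M.γ| < 1 :=
  (abs_of_pos M.γ_pos).trans_lt M.γ_lt_one

omit [DecidableEq A] in
theorem isUnit_det_one_sub_smul_policyMatrix_mul_transMatrix (hπ : IsPolicy π) :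
    IsUnit (1 - M.γ • (policyMatrix π * transMatrix M)).det := by
  classical
  rw [← Matrix.mul_smul, det_one_sub_mul_comm, Matrix.smul_mul]
  exact isUnit_det_one_sub_smul_of_mem_rowStochastic
    (transMatrix_mul_policyMatrix_mem_rowStochastic M hπ) (abs_discount_lt_one M)

end Matrices

section Values

variable (M : MDP S A) {π : S → A → ℝ}

omit [DecidableEq A] in
theorem hasSum_discounted_prob (hπ : IsPolicy π) (f : S × A → ℝ) :
    HasSum (fun t : ℕ => M.γ ^ t * ∑ h : Hist S A t, prob M π t h * f (lastSA h))
      (M.μ0 ⬝ᵥ (1 - M.γ • (policyMatrix π * transMatrix M))⁻¹ *ᵥ policyMatrix π *ᵥ f) := by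
  classical
  rw [mulVec_mulVec, inv_one_sub_smul_mul_mul_eq, ← mulVec_mulVec, dotProduct_mulVec]
  simpa only [prob, lastSA, vecMul_policyMatrix_apply, transMatrix_mul_policyMatrix_apply] using
    hasSum_discounted_sum_path (transMatrix_mul_policyMatrix_mem_rowStochastic M hπ)
      (abs_discount_lt_one M) (M.μ0 ᵥ* policyMatrix π) f

theorem uncurry_Qval (hπ : IsPolicy π) :
    Function.uncurry (Qval M π) =
      (1 - M.γ • (transMatrix M * policyMatrix π))⁻¹ *ᵥ Function.uncurry M.r := by
  ext ⟨s, a⟩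
  have hsum := hasSum_discounted_sum_path (transMatrix_mul_policyMatrix_mem_rowStochastic M hπ)
    (abs_discount_lt_one M) (Pi.single (s, a) 1) (Function.uncurry M.r)
  rw [single_one_dotProduct] at hsum
  rw [← hsum.tsum_eq]
  simp only [Function.uncurry_def, Qval, probFrom, lastSA, Pi.single_apply,
    transMatrix_mul_policyMatrix_apply]

theorem Vval_eq_mulVec_Qval (π : S → A → ℝ) :
    Vval M π = policyMatrix π *ᵥ Function.uncurry (Qval M π) := by
  ext s
  rw [policyMatrix_mulVec_apply]
  rfl

theorem uncurry_Qval_eq_add_smul_Vval (hπ : IsPolicy π) :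
    Function.uncurry (Qval M π) =
      Function.uncurry M.r + M.γ • transMatrix M *ᵥ Vval M π := by
  have hdet := isUnit_det_one_sub_smul_of_mem_rowStochastic
    (transMatrix_mul_policyMatrix_mem_rowStochastic M hπ) (abs_discount_lt_one M)
  have bellman : (1 - M.γ • (transMatrix M * policyMatrix π)) *ᵥ Function.uncurry (Qval M π) =
      Function.uncurry M.r := by
    rw [uncurry_Qval M hπ, mulVec_mulVec, mul_nonsing_inv _ hdet, one_mulVec]
  rw [Vval_eq_mulVec_Qval, mulVec_mulVec, ← smul_mulVec, ← bellman, sub_mulVec, one_mulVec,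
    sub_add_cancel]

omit [DecidableEq A] in
theorem ηval_eq_dotProduct_mulVec (hπ : IsPolicy π) :
    ηval M π = M.μ0 ⬝ᵥ (1 - M.γ • (policyMatrix π * transMatrix M))⁻¹ *ᵥ
      policyMatrix π *ᵥ Function.uncurry M.r :=
  (hasSum_discounted_prob M hπ (Function.uncurry M.r)).tsum_eq

theorem ηval_eq_dotProduct_Vval (hπ : IsPolicy π) : ηval M π = M.μ0 ⬝ᵥ Vval M π := by
  rw [ηval_eq_dotProduct_mulVec M hπ, Vval_eq_mulVec_Qval, uncurry_Qval M hπ, mulVec_mulVec,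
    mulVec_mulVec, inv_one_sub_smul_mul_mul_eq]

omit [DecidableEq A] in
theorem dOcc_eq_smul_vecMul (hπ : IsPolicy π) :
    dOcc M π = (1 - M.γ) • (M.μ0 ᵥ* (1 - M.γ • (policyMatrix π * transMatrix M))⁻¹) := by
  ext s
  have hsum := hasSum_discounted_prob M hπ ((Pi.single s 1 : S → ℝ) ∘ Prod.fst)
  rw [policyMatrix_mulVec_comp_fst hπ, dotProduct_mulVec, dotProduct_single_one] at hsum
  rw [Pi.smul_apply, ← hsum.tsum_eq]
  simp only [dOcc, Function.comp_apply, Pi.single_apply, smul_eq_mul]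

theorem policyMatrix_mulVec_uncurry_Adv {π' : S → A → ℝ} (hπ : IsPolicy π) (hπ' : IsPolicy π') :
    policyMatrix π' *ᵥ Function.uncurry (Adv M π) =
      policyMatrix π' *ᵥ Function.uncurry M.r -
        (1 - M.γ • (policyMatrix π' * transMatrix M)) *ᵥ Vval M π := by
  have adv_eq : Function.uncurry (Adv M π) =
      Function.uncurry (Qval M π) - Vval M π ∘ Prod.fst := rfl
  rw [adv_eq, uncurry_Qval_eq_add_smul_Vval M hπ, mulVec_sub, mulVec_add, mulVec_smul,
    mulVec_mulVec, policyMatrix_mulVec_comp_fst hπ', sub_mulVec, one_mulVec, smul_mulVec,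
    sub_sub_eq_add_sub]

end Values

/-- Performance difference lemma (Kakade–Langford):
`η(π̃) − η(π) = (1/(1−γ)) ∑_s d^{π̃}(s) ∑_a π̃(a|s) A^π(s,a)`. -/
theorem performance_difference_lemma
    (M : MDP S A) (π π' : S → A → ℝ)
    (hπ : IsPolicy π) (hπ' : IsPolicy π') :
    ηval M π' - ηval M π =
      (1 - M.γ)⁻¹ * ∑ s, dOcc M π' s * ∑ a, π' s a * Adv M π s a := by
  let T' := policyMatrix π' * transMatrix M
  have occupancy_sum : ∑ s, dOcc M π' s * ∑ a, π' s a * Adv M π s a =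
      (1 - M.γ) * (M.μ0 ⬝ᵥ (1 - M.γ • T')⁻¹ *ᵥ policyMatrix π' *ᵥ Function.uncurry (Adv M π)) := by
    rw [dotProduct_mulVec, ← smul_eq_mul, ← smul_dotProduct, ← dOcc_eq_smul_vecMul M hπ']
    simp only [dotProduct, policyMatrix_mulVec_apply, Function.uncurry_apply_pair]
  have resolvent_cancel : (1 - M.γ • T')⁻¹ *ᵥ (1 - M.γ • T') *ᵥ Vval M π = Vval M π := by
    rw [mulVec_mulVec,
      nonsing_inv_mul _ (isUnit_det_one_sub_smul_policyMatrix_mul_transMatrix M hπ'), one_mulVec]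
  rw [occupancy_sum, inv_mul_cancel_left₀ (sub_pos.mpr M.γ_lt_one).ne',
    policyMatrix_mulVec_uncurry_Adv M hπ hπ', mulVec_sub, resolvent_cancel, dotProduct_sub,
    ηval_eq_dotProduct_mulVec M hπ', ηval_eq_dotProduct_Vval M hπ]

end PolicyOpt
end
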